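/- Let t, N, K be integers with 1 ≤ t ≤ K and K > N ≥ 3, and define α_t = K(K − t)/((t+1)(tN − 1)) − N(K − 1)/(tN − 1) and β_t = N − N/K − (K − t)/((t+1)(tN − 1)) + N(K − 1)/(K(tN − 1)). Then N(1 − N/(2K)) ≤ α_t·((N−1)/K) + β_t. In other words, at cache capacity M = (N−1)/K the delivery rate N(1 − N/(2K)) of the proposed scheme is at most the delivery rate R_{M,t} = α_t M + β_t of every memory-sharing line of the Maddah-Ali–Niesen–Chen scheme. -/

import Mathlib

/-!
The gap between the two rates is `N - 2` times a quadratic in `K`, over a positive denominator.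
The discriminant of the quadratic is nonpositive for `t ≥ 2` and `N ≥ 3`. For `t = 1` its roots are
the consecutive integers `N` and `N + 1`, and no integer `K` lies strictly between them. For
`N = 2` the gap vanishes.
-/

section CommRing

variable {R : Type*} [CommRing R]

/-- The quadratic in `K` that decides the sign of the rate gap at capacity `(N - 1) / K`: the
numerator of the gap after removing its factor `N - 2` (see `rate_gap_eq`). -/
def gapQuadratic (t N K : R) : R :=
  2 * K * (K - t) - 2 * N * (K - 1) * (t + 1) + N * (t + 1) * (t * N - 1)

theorem intCast_gapQuadratic (t N K : ℤ) :
    ((gapQuadratic t N K : ℤ) : R) = gapQuadratic (t : R) N K := by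
  simp [gapQuadratic]

theorem gapQuadratic_one_left (N K : R) :
    gapQuadratic 1 N K = 2 * ((K - N) ^ 2 - (K - N)) := by
  unfold gapQuadratic
  ring

theorem two_mul_gapQuadratic (t N K : R) :
    2 * gapQuadratic t N K =
      (2 * K - t - N * (t + 1)) ^ 2 + ((t ^ 2 - 1) * (N * (N - 2)) - t ^ 2) := by
  unfold gapQuadratic
  ring

theorem gapQuadratic_nonneg_of_sq_le [LinearOrder R] [IsStrictOrderedRing R] {t N : R}
    (h : t ^ 2 ≤ (t ^ 2 - 1) * (N * (N - 2))) (K : R) : 0 ≤ gapQuadratic t N K := by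
  refine nonneg_of_mul_nonneg_right (a := 2) ?_ two_pos
  rw [two_mul_gapQuadratic]
  exact add_nonneg (sq_nonneg _) (sub_nonneg.mpr h)

end CommRing

theorem gapQuadratic_nonneg {t N : ℤ} (ht : 1 ≤ t) (hN : 3 ≤ N) (K : ℤ) :
    0 ≤ gapQuadratic t N K := by
  rcases ht.eq_or_lt with rfl | ht
  · rw [gapQuadratic_one_left]
    exact mul_nonneg two_pos.le (sub_nonneg.mpr (Int.le_self_sq _))
  · have ht_sq : 2 ^ 2 ≤ t ^ 2 := pow_le_pow_left₀ two_pos.le ht 2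
    have hN_mul : 3 * 1 ≤ N * (N - 2) := by gcongr; linarith
    apply gapQuadratic_nonneg_of_sq_le
    calc
      t ^ 2 ≤ (t ^ 2 - 1) * (3 * 1) := by linarith
      _ ≤ (t ^ 2 - 1) * (N * (N - 2)) := mul_le_mul_of_nonneg_left hN_mul (by linarith)

theorem sub_two_mul_gapQuadratic_nonneg {t N : ℤ} (ht : 1 ≤ t) (hN : 2 ≤ N) (K : ℤ) :
    0 ≤ (N - 2) * gapQuadratic t N K := by
  rcases hN.eq_or_lt with rfl | hN
  · simp
  · exact mul_nonneg (by linarith) (gapQuadratic_nonneg ht hN K)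

section Field

variable {F : Type*} [Field F]

/-- The slope `α_t` of the memory-sharing line between the scheme of Chen et al. at `M = 1 / K` and
the Maddah-Ali–Niesen scheme at `M = t N / K`. -/
def mncSlope (t N K : F) : F :=
  K * (K - t) / ((t + 1) * (t * N - 1)) - N * (K - 1) / (t * N - 1)

/-- The intercept `β_t` at `M = 0` of the memory-sharing line with slope `mncSlope t N K`. -/
def mncIntercept (t N K : F) : F :=
  N - N / K - (K - t) / ((t + 1) * (t * N - 1)) + N * (K - 1) / (K * (t * N - 1))

theorem rate_gap_eq [NeZero (2 : F)] {t N K : F} (hK : K ≠ 0) (ht : t + 1 ≠ 0)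
    (htN : t * N - 1 ≠ 0) :
    mncSlope t N K * ((N - 1) / K) + mncIntercept t N K - N * (1 - N / (2 * K)) =
      (N - 2) * gapQuadratic t N K / (2 * K * (t + 1) * (t * N - 1)) := by
  have two_ne : (2 : F) ≠ 0 := two_ne_zero
  unfold mncSlope mncIntercept gapQuadratic
  field_simp
  ring

end Field

theorem stmt_8_general {F : Type*} [Field F] [LinearOrder F] [IsStrictOrderedRing F]
    {t N K : ℤ} (ht : 1 ≤ t) (hK : 0 < K) (hN : 2 ≤ N) :
    (N : F) * (1 - N / (2 * K)) ≤
      mncSlope (t : F) N K * ((N - 1) / K) + mncIntercept (t : F) N K := by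
  have hK' : (0 : F) < K := mod_cast hK
  have ht' : (0 : F) < t + 1 := mod_cast (by linarith : 0 < t + 1)
  have htN : (0 : F) < t * N - 1 := mod_cast (by nlinarith : 0 < t * N - 1)
  have hnum : (0 : F) ≤ (N - 2) * gapQuadratic (t : F) N K := by
    rw [← intCast_gapQuadratic]
    exact mod_cast sub_two_mul_gapQuadratic_nonneg ht hN K
  rw [← sub_nonneg, rate_gap_eq hK'.ne' ht'.ne' htN.ne']
  exact div_nonneg hnum (by positivity)

/-- For integers `1 ≤ t ≤ K` and `K > N ≥ 3`, at cache capacity `M = (N−1)/K`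
the delivery rate `N(1 − N/(2K))` of the proposed scheme is at most the rate
`α_t·M + β_t` of every memory-sharing line of the MNC scheme. -/
theorem stmt_8 (t N K : ℤ) (ht : 1 ≤ t) (htK : t ≤ K) (hNK : N < K) (hN : 3 ≤ N)
    (α β : ℝ)
    (hα : α = (K : ℝ) * ((K : ℝ) - (t : ℝ)) / (((t : ℝ) + 1) * ((t : ℝ) * (N : ℝ) - 1))
        - (N : ℝ) * ((K : ℝ) - 1) / ((t : ℝ) * (N : ℝ) - 1))
    (hβ : β = (N : ℝ) - (N : ℝ) / (K : ℝ)
        - ((K : ℝ) - (t : ℝ)) / (((t : ℝ) + 1) * ((t : ℝ) * (N : ℝ) - 1))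
        + (N : ℝ) * ((K : ℝ) - 1) / ((K : ℝ) * ((t : ℝ) * (N : ℝ) - 1))) :
    (N : ℝ) * (1 - (N : ℝ) / (2 * (K : ℝ))) ≤ α * (((N : ℝ) - 1) / (K : ℝ)) + β := by
  subst hα hβ
  exact stmt_8_general ht (by linarith) (by linarith)
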